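/- arXiv:1606.08246 — 4 statements merged into one kernel-verified Lean document; each statement's English description precedes it below -/
import Mathlib

section
/- In a finite bipartite graph G with a function b : V(G) → ℕ, the maximum cardinality of a b-matching of G equals the minimum, over all subsets Z ⊆ V(G), of b(V(G) ∖ Z) + |E[Z]|. -/
open scoped symmDiff

variable {V : Type} [Fintype V]

/-- `G` is bipartite with color classes `A` and `B`. -/
structure Bipartition (G : SimpleGraph V) (A B : Set V) : Prop where
  disjoint : Disjoint A B
  cover : A ∪ B = Set.univ
  between : ∀ ⦃u v : V⦄, G.Adj u v → (u ∈ A ∧ v ∈ B) ∨ (u ∈ B ∧ v ∈ A)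

/-- `M` is a `b`-matching of `G`: a set of edges of `G` such that each vertex `v` is
incident to at most `b v` edges of `M`. -/
def IsBMatching (G : SimpleGraph V) (b : V → ℕ) (M : Set (Sym2 V)) : Prop :=
  M ⊆ G.edgeSet ∧ ∀ v : V, {e ∈ M | v ∈ e}.ncard ≤ b v

/-- `M` is a maximum `b`-matching of `G`. -/
def IsMaxBMatching (G : SimpleGraph V) (b : V → ℕ) (M : Set (Sym2 V)) : Prop :=
  IsBMatching G b M ∧ ∀ N : Set (Sym2 V), IsBMatching G b N → N.ncard ≤ M.ncard

/-- `E[X]`: the set of edges of `G` with both ends in `X`. -/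
def edgesIn (G : SimpleGraph V) (X : Set V) : Set (Sym2 V) :=
  {e ∈ G.edgeSet | ∀ v ∈ e, v ∈ X}

/-- `b(X) = ∑_{v ∈ X} b v`. -/
noncomputable def bSum (b : V → ℕ) (X : Set V) : ℕ := ∑ᶠ v ∈ X, b v

/-- `Z` is a `b`-verifying set: `b(Zᶜ) + |E[Z]|` equals the size of a maximum `b`-matching. -/
def IsVerifying (G : SimpleGraph V) (b : V → ℕ) (Z : Set V) : Prop :=
  ∃ M : Set (Sym2 V), IsMaxBMatching G b M ∧ bSum b Zᶜ + (edgesIn G Z).ncard = M.ncard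

/-- `v` is `M`-tight. -/
def IsTight (b : V → ℕ) (M : Set (Sym2 V)) (v : V) : Prop :=
  {e ∈ M | v ∈ e}.ncard = b v

/-- `v` is `M`-loose. -/
def IsLoose (b : V → ℕ) (M : Set (Sym2 V)) (v : V) : Prop :=
  {e ∈ M | v ∈ e}.ncard < b v

/-- `M` is a perfect `b`-matching. -/
def IsPerfect (G : SimpleGraph V) (b : V → ℕ) (M : Set (Sym2 V)) : Prop :=
  IsBMatching G b M ∧ ∀ v : V, IsTight b M v

/-- An edge is `b`-inevitable if it is an edge of `G` contained in every maximum `b`-matching. -/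
def IsInevitable (G : SimpleGraph V) (b : V → ℕ) (e : Sym2 V) : Prop :=
  e ∈ G.edgeSet ∧ ∀ M : Set (Sym2 V), IsMaxBMatching G b M → e ∈ M

/-- An edge is `b`-forbidden if it is an edge of `G` contained in no maximum `b`-matching. -/
def IsForbidden (G : SimpleGraph V) (b : V → ℕ) (e : Sym2 V) : Prop :=
  e ∈ G.edgeSet ∧ ∀ M : Set (Sym2 V), IsMaxBMatching G b M → e ∉ M

/-- An edge is `b`-flexible if some maximum `b`-matching contains it and some does not. -/
def IsFlexibleEdge (G : SimpleGraph V) (b : V → ℕ) (e : Sym2 V) : Prop :=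
  (∃ M : Set (Sym2 V), IsMaxBMatching G b M ∧ e ∈ M) ∧
  (∃ M : Set (Sym2 V), IsMaxBMatching G b M ∧ e ∉ M)

/-- The spanning subgraph of `G` whose edges are the `b`-flexible edges. -/
def flexGraph (G : SimpleGraph V) (b : V → ℕ) : SimpleGraph V where
  Adj u v := IsFlexibleEdge G b s(u, v)
  symm := by
    constructor
    intro u v h
    rwa [Sym2.eq_swap] at h
  loopless := by
    constructor
    intro v h
    obtain ⟨⟨M, hM, heM⟩, -⟩ := h
    exact G.loopless.irrefl v ((G.mem_edgeSet).mp (hM.1.1 heM))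

/-- A `b`-flexible component of `G`, identified with the corresponding connected
component of the spanning subgraph of flexible edges. -/
abbrev FlexComp (G : SimpleGraph V) (b : V → ℕ) := (flexGraph G b).ConnectedComponent

/-- `D(G;b)`: the set of vertices that are `M`-loose for some maximum `b`-matching `M`. -/
def Dset (G : SimpleGraph V) (b : V → ℕ) : Set V :=
  {v | ∃ M : Set (Sym2 V), IsMaxBMatching G b M ∧ IsLoose b M v}

/-- `c` is a `b`-loose flexible component. -/
def LooseComp (G : SimpleGraph V) (b : V → ℕ) (c : FlexComp G b) : Prop :=
  ∃ v ∈ c.supp, v ∈ Dset G b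

/-- `c` is a `b`-inactive flexible component. -/
def InactiveComp (G : SimpleGraph V) (b : V → ℕ) (c : FlexComp G b) : Prop :=
  ∃ v, c.supp = {v} ∧ b v = 0

/-- `c` is a `b`-inconsistent flexible component. -/
def InconsistentComp (G : SimpleGraph V) (b : V → ℕ) (c : FlexComp G b) : Prop :=
  LooseComp G b c ∨ ∃ v, c.supp = {v} ∧ b v = 0 ∧ ∃ u ∈ Dset G b, G.Adj v u

/-- `c` is a `b`-consistent flexible component. -/
def ConsistentComp (G : SimpleGraph V) (b : V → ℕ) (c : FlexComp G b) : Prop :=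
  ¬ InconsistentComp G b c

/-- `c` is a `b`-loose flexible component hooked up by the color class `W`. -/
def LooseHooked (G : SimpleGraph V) (b : V → ℕ) (W : Set V) (c : FlexComp G b) : Prop :=
  ∃ v ∈ c.supp ∩ W, v ∈ Dset G b

/-- `c` is a `b`-inactive flexible component hooked up by the color class `W`. -/
def InactiveHooked (G : SimpleGraph V) (b : V → ℕ) (W : Set V) (c : FlexComp G b) : Prop :=
  ∃ v, c.supp = {v} ∧ b v = 0 ∧ ∃ u ∈ Dset G b ∩ W, G.Adj v u

/-- `c` is a `b`-inconsistent flexible component hooked up by the color class `W`. -/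
def HookedUp (G : SimpleGraph V) (b : V → ℕ) (W : Set V) (c : FlexComp G b) : Prop :=
  LooseHooked G b W c ∨ InactiveHooked G b W c

/-- `X` is separating: empty or a union of vertex sets of `b`-flexible components. -/
def IsSeparating (G : SimpleGraph V) (b : V → ℕ) (X : Set V) : Prop :=
  ∃ S : Set (FlexComp G b), X = ⋃ c ∈ S, c.supp

/-- The number of edges in the list `es` incident to `v` that lie in `M`. -/
noncomputable def edgeDeg (es : List (Sym2 V)) (M : Set (Sym2 V)) (v : V) : ℕ :=
  {e : Sym2 V | e ∈ es ∧ v ∈ e ∧ e ∈ M}.ncard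

/-- `p` is an `M`-wedge path from `x` to `y`. -/
def IsWedgePath {G : SimpleGraph V} (M : Set (Sym2 V)) {x y : V} (p : G.Walk x y) : Prop :=
  p.IsPath ∧ (∀ v ∈ p.support, v ≠ y → edgeDeg p.edges M v = 1) ∧ edgeDeg p.edges M y = 0

/-- `p` is an `M`-saturated path between `x` and `y`. -/
def IsSaturatedPath {G : SimpleGraph V} (M : Set (Sym2 V)) {x y : V} (p : G.Walk x y) : Prop :=
  p.IsPath ∧ ∀ v ∈ p.support, edgeDeg p.edges M v = 1

/-- `p` is an `M`-exposed path between `x` and `y`. -/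
def IsExposedPath {G : SimpleGraph V} (M : Set (Sym2 V)) {x y : V} (p : G.Walk x y) : Prop :=
  p.IsPath ∧ ∀ v ∈ p.support, edgeDeg p.edges Mᶜ v = 1

/-- `p` is an `(M; A, B)`-ascending path from `u` to `v`. -/
def IsAscending {G : SimpleGraph V} (A B : Set V) (M : Set (Sym2 V)) {u v : V}
    (p : G.Walk u v) : Prop :=
  (u ∈ A → v ∈ A → IsWedgePath M p) ∧
  (u ∈ A → v ∈ B → IsSaturatedPath M p) ∧
  (u ∈ B → v ∈ A → IsExposedPath M p) ∧
  (u ∈ B → v ∈ B → IsWedgePath M p.reverse)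

/-- The one-step relation `⊴_A` on `b`-flexible components: `c₁ ⊴_A c₂` iff `c₁ = c₂`, or
there is a `b`-inevitable edge between `V(c₁) ∩ A` and `V(c₂) ∩ B`, or a `b`-forbidden edge
between `V(c₂) ∩ A` and `V(c₁) ∩ B`. -/
def StepRel (G : SimpleGraph V) (b : V → ℕ) (A B : Set V) (c₁ c₂ : FlexComp G b) : Prop :=
  c₁ = c₂ ∨
  (∃ u ∈ c₁.supp ∩ A, ∃ v ∈ c₂.supp ∩ B, IsInevitable G b s(u, v)) ∨
  (∃ u ∈ c₂.supp ∩ A, ∃ v ∈ c₁.supp ∩ B, IsForbidden G b s(u, v))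

/-- The one-step relation `⊴_A` restricted to `b`-consistent flexible components. -/
def ConsStepRel (G : SimpleGraph V) (b : V → ℕ) (A B : Set V) (c₁ c₂ : FlexComp G b) : Prop :=
  ConsistentComp G b c₁ ∧ ConsistentComp G b c₂ ∧ StepRel G b A B c₁ c₂

/-- `I` is a lower ideal of the relation `r`. -/
def IsLowerIdeal {α : Type*} (r : α → α → Prop) (I : Set α) : Prop :=
  ∀ ⦃c d : α⦄, d ∈ I → r c d → c ∈ I

/-- `I` is an upper ideal of the relation `r`. -/
def IsUpperIdeal {α : Type*} (r : α → α → Prop) (I : Set α) : Prop :=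
  ∀ ⦃c d : α⦄, c ∈ I → r c d → d ∈ I

/-!
Every `b`-matching `M` and vertex set `Z` satisfy `|M| ≤ b(Zᶜ) + |E[Z]|`: an edge of `M` either has
an end outside `Z`, where at most `b(Zᶜ)` of them fit, or lies in `E[Z]`.

Equality is by induction on the edges. Delete an edge `e`, and let `M₁`, `Z₁` be optimal for `G - e`
and `b`. If an end of `e` has capacity zero, removing it from `Z₁` gives a set as good for `G`.
Otherwise lower `b` by one at both ends of `e`, and let `M₂`, `Z₂` be optimal for `G - e` with these
capacities; then `M₂ ∪ {e}` is a `b`-matching of `G`. If `Z₂` contains an end of `e`, its cost grows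
by at most one on returning to `G` and `b`. If not, it may grow by two, and one uncrosses `Z₁` and
`Z₂`: because `G` is bipartite, the cost is submodular for the operations that intersect on one
color class and unite on the other. Neither of the two sets obtained contains `e`, so the edge
itself costs them nothing, and the cheaper one has cost at most `max |M₁| (|M₂| + 1)`.
-/

section Set

variable {α : Type*} {A X Y : Set α} {x : α}

/-- The set agreeing with `X ∩ Y` on `A` and with `X ∪ Y` off `A`. When `A` is a color class of a
bipartite graph, `X` and `Y` are uncrossed into the pair `uncross A X Y`, `uncross Aᶜ X Y`. -/
def uncross (A X Y : Set α) : Set α :=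
  A.ite (X ∩ Y) (X ∪ Y)

theorem mem_uncross_of_mem (hx : x ∈ A) : x ∈ uncross A X Y ↔ x ∈ X ∧ x ∈ Y := by
  simp [uncross, Set.ite, hx]

theorem mem_uncross_of_notMem (hx : x ∉ A) : x ∈ uncross A X Y ↔ x ∈ X ∨ x ∈ Y := by
  simp only [uncross, Set.ite, Set.mem_union, Set.mem_inter_iff, Set.mem_sdiff]
  tauto

theorem uncross_union_uncross_compl (A X Y : Set α) :
    uncross A X Y ∪ uncross Aᶜ X Y = X ∪ Y := by
  grind [uncross, Set.ite]

theorem uncross_inter_uncross_compl (A X Y : Set α) :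
    uncross A X Y ∩ uncross Aᶜ X Y = X ∩ Y := by
  grind [uncross, Set.ite]

theorem ncard_coe_sym2_le_two (e : Sym2 α) : (e : Set α).ncard ≤ 2 := by
  induction e with | _ u v
  rw [Sym2.coe_mk]
  exact (Set.ncard_insert_le u {v}).trans (by rw [Set.ncard_singleton])

end Set

section MinMax

variable {W : Type} {G H : SimpleGraph W} {A B X Y Z : Set W} {M : Set (Sym2 W)}
  {e : Sym2 W} {b c : W → ℕ} {w : W}

theorem Bipartition.mono (hH : Bipartition H A B) (hGH : G ≤ H) : Bipartition G A B :=
  ⟨hH.disjoint, hH.cover, fun _ _ huv ↦ hH.between (hGH huv)⟩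

theorem Bipartition.exists_eq_mk (hG : Bipartition G A B) (he : e ∈ G.edgeSet) :
    ∃ u ∈ A, ∃ v ∉ A, e = s(u, v) := by
  induction e with | _ u v
  rcases hG.between he with ⟨hu, hv⟩ | ⟨hu, hv⟩
  · exact ⟨u, hu, v, hG.disjoint.notMem_of_mem_right hv, rfl⟩
  · exact ⟨v, hv, u, hG.disjoint.notMem_of_mem_right hu, Sym2.eq_swap⟩

theorem edgesIn_subset_edgesIn (hXY : X ⊆ Y) : edgesIn G X ⊆ edgesIn G Y :=
  fun _ he ↦ ⟨he.1, fun w hw ↦ hXY (he.2 w hw)⟩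

theorem edgesIn_deleteEdges (G : SimpleGraph W) (S : Set (Sym2 W)) (Z : Set W) :
    edgesIn (G.deleteEdges S) Z = edgesIn G Z \ S := by
  ext e
  simp only [edgesIn, SimpleGraph.edgeSet_deleteEdges, Set.mem_sdiff, Set.mem_ofPred_eq]
  tauto

theorem edgesIn_inter (G : SimpleGraph W) (X Y : Set W) :
    edgesIn G (X ∩ Y) = edgesIn G X ∩ edgesIn G Y := by
  ext e
  simp only [edgesIn, Set.mem_inter_iff, Set.mem_ofPred_eq, forall₂_and]
  tauto

theorem IsBMatching.mono (hM : IsBMatching G b M) (hGH : G ≤ H) : IsBMatching H b M :=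
  ⟨hM.1.trans (SimpleGraph.edgeSet_mono hGH), hM.2⟩

theorem isBMatching_empty (G : SimpleGraph W) (b : W → ℕ) : IsBMatching G b ∅ := by
  simp [IsBMatching]

/-- The value `b(Zᶜ) + |E[Z]|` minimized in the min-max formula: the cost of covering the edges of
`G` by the vertices outside `Z`, each paid for with its capacity, and the edges inside `Z`, each
paid for with `1`. -/
noncomputable def coverCost (G : SimpleGraph W) (b : W → ℕ) (Z : Set W) : ℕ :=
  bSum b Zᶜ + (edgesIn G Z).ncard

theorem coverCost_deleteEdges_singleton_of_notMem (hwe : w ∈ e) (hwZ : w ∉ Z) :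
    coverCost (G.deleteEdges {e}) b Z = coverCost G b Z := by
  have he : e ∉ edgesIn G Z := fun he ↦ hwZ (he.2 w hwe)
  rw [coverCost, edgesIn_deleteEdges, Set.sdiff_singleton_eq_self he, coverCost]

theorem coverCost_le_coverCost_deleteEdges_singleton_add_one (G : SimpleGraph W) (b : W → ℕ)
    (e : Sym2 W) (Z : Set W) : coverCost G b Z ≤ coverCost (G.deleteEdges {e}) b Z + 1 := by
  have hncard := Set.ncard_le_ncard_sdiff_add_ncard (edgesIn G Z) {e}
  rw [Set.ncard_singleton, ← edgesIn_deleteEdges] at hncard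
  unfold coverCost
  omega

variable [Finite W]

theorem IsBMatching.insert_edge (hM : IsBMatching G b M) (he : e ∈ G.edgeSet) :
    IsBMatching G (b + (e : Set W).indicator 1) (insert e M) := by
  refine ⟨Set.insert_subset he hM.1, fun w ↦ ?_⟩
  by_cases hw : w ∈ e
  · calc {f ∈ insert e M | w ∈ f}.ncard
        ≤ (insert e {f ∈ M | w ∈ f}).ncard :=
          Set.ncard_le_ncard fun f hf ↦ hf.1.imp_right (⟨·, hf.2⟩)
      _ ≤ {f ∈ M | w ∈ f}.ncard + 1 := Set.ncard_insert_le _ _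
      _ ≤ b w + (e : Set W).indicator 1 w := by simpa [hw] using hM.2 w
  · calc {f ∈ insert e M | w ∈ f}.ncard
        ≤ {f ∈ M | w ∈ f}.ncard :=
          Set.ncard_le_ncard fun f hf ↦ ⟨hf.1.resolve_left fun h ↦ hw (h ▸ hf.2), hf.2⟩
      _ ≤ b w + (e : Set W).indicator 1 w := by simpa [hw] using hM.2 w

theorem bSum_le_bSum (hbc : b ≤ c) (X : Set W) : bSum b X ≤ bSum c X := by
  simp only [bSum, finsum_mem_eq_finite_toFinset_sum _ X.toFinite]
  exact Finset.sum_le_sum fun w _ ↦ hbc w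

theorem bSum_union_add_bSum_inter (b : W → ℕ) (X Y : Set W) :
    bSum b (X ∪ Y) + bSum b (X ∩ Y) = bSum b X + bSum b Y :=
  finsum_mem_union_inter X.toFinite Y.toFinite

theorem bSum_add_indicator_one (b : W → ℕ) (S X : Set W) :
    bSum (b + S.indicator 1) X = bSum b X + (X ∩ S).ncard := by
  have hS : ∑ᶠ w ∈ X, S.indicator (1 : W → ℕ) w = (X ∩ S).ncard := by
    rw [finsum_mem_def, Set.indicator_indicator, ← finsum_mem_def]
    exact finsum_one
  rw [← hS]
  exact finsum_mem_add_distrib X.toFinite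

theorem IsBMatching.ncard_le_coverCost (hM : IsBMatching G b M) (Z : Set W) :
    M.ncard ≤ coverCost G b Z := by
  have hcover : M ⊆ (⋃ w ∈ Zᶜ, {e ∈ M | w ∈ e}) ∪ edgesIn G Z := by
    intro e he
    by_cases hZ : ∀ w ∈ e, w ∈ Z
    · exact Or.inr ⟨hM.1 he, hZ⟩
    · push Not at hZ
      obtain ⟨w, hwe, hwZ⟩ := hZ
      exact Or.inl (Set.mem_biUnion hwZ ⟨he, hwe⟩)
  calc M.ncard
      ≤ (⋃ w ∈ Zᶜ, {e ∈ M | w ∈ e}).ncard + (edgesIn G Z).ncard :=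
        (Set.ncard_le_ncard hcover).trans (Set.ncard_union_le _ _)
    _ ≤ bSum (fun w ↦ {e ∈ M | w ∈ e}.ncard) Zᶜ + (edgesIn G Z).ncard := by
        gcongr
        exact Zᶜ.toFinite.ncard_biUnion_le _
    _ ≤ coverCost G b Z := by
        unfold coverCost
        gcongr
        exact bSum_le_bSum hM.2 Zᶜ

theorem coverCost_sdiff_singleton_le (hw : b w = 0) (Z : Set W) :
    coverCost G b (Z \ {w}) ≤ coverCost G b Z := by
  have hbSum : bSum b (Z \ {w})ᶜ = bSum b Zᶜ := by
    rw [Set.sdiff_eq, Set.compl_inter, compl_compl, Set.union_singleton]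
    exact finsum_mem_insert_zero hw
  rw [coverCost, hbSum, coverCost]
  exact Nat.add_le_add_left (Set.ncard_le_ncard (edgesIn_subset_edgesIn Set.sdiff_subset)) _

theorem coverCost_add_indicator_one (G : SimpleGraph W) (b : W → ℕ) (S Z : Set W) :
    coverCost G (b + S.indicator 1) Z = coverCost G b Z + (S \ Z).ncard := by
  rw [coverCost, bSum_add_indicator_one, Set.inter_comm, ← Set.sdiff_eq, coverCost,
    add_right_comm]

theorem coverCost_add_indicator_coe_le_add_two (G : SimpleGraph W) (b : W → ℕ) (e : Sym2 W)
    (Z : Set W) : coverCost G (b + (e : Set W).indicator 1) Z ≤ coverCost G b Z + 2 := by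
  rw [coverCost_add_indicator_one]
  gcongr
  exact (Set.ncard_le_ncard Set.sdiff_subset).trans (ncard_coe_sym2_le_two e)

theorem coverCost_add_indicator_coe_le_deleteEdges_add_one (hwe : w ∈ e) (hwZ : w ∈ Z) :
    coverCost G (b + (e : Set W).indicator 1) Z ≤ coverCost (G.deleteEdges {e}) b Z + 1 := by
  rw [coverCost_add_indicator_one]
  by_cases heZ : (e : Set W) ⊆ Z
  · rw [Set.sdiff_eq_empty.mpr heZ, Set.ncard_empty]
    exact coverCost_le_coverCost_deleteEdges_singleton_add_one G b e Z
  · obtain ⟨x, hxe, hxZ⟩ := Set.not_subset.mp heZ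
    have hlt : ((e : Set W) \ Z).ncard < (e : Set W).ncard :=
      Set.ncard_lt_ncard ⟨Set.sdiff_subset, fun h ↦ (h hwe).2 hwZ⟩
    have htwo := ncard_coe_sym2_le_two e
    rw [coverCost_deleteEdges_singleton_of_notMem hxe hxZ]
    omega

theorem bSum_compl_uncross_add (b : W → ℕ) (A X Y : Set W) :
    bSum b (uncross A X Y)ᶜ + bSum b (uncross Aᶜ X Y)ᶜ = bSum b Xᶜ + bSum b Yᶜ := by
  rw [← bSum_union_add_bSum_inter, ← Set.compl_inter, ← Set.compl_union,
    uncross_inter_uncross_compl, uncross_union_uncross_compl, Set.compl_inter, Set.compl_union,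
    bSum_union_add_bSum_inter]

theorem Bipartition.ncard_edgesIn_uncross_add_le (hG : Bipartition G A B) (X Y : Set W) :
    (edgesIn G (uncross A X Y)).ncard + (edgesIn G (uncross Aᶜ X Y)).ncard ≤
      (edgesIn G X).ncard + (edgesIn G Y).ncard := by
  have hunion : edgesIn G (uncross A X Y) ∪ edgesIn G (uncross Aᶜ X Y) ⊆
      edgesIn G X ∪ edgesIn G Y := by
    intro e he
    have heG : e ∈ G.edgeSet := he.elim And.left And.left
    obtain ⟨u, hu, v, hv, rfl⟩ := hG.exists_eq_mk heG
    have hu' : u ∉ Aᶜ := Set.notMem_compl_iff.mpr hu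
    simp only [edgesIn, Set.mem_union, Set.mem_ofPred_eq, heG, true_and, Sym2.ball,
      mem_uncross_of_mem hu, mem_uncross_of_notMem hv, mem_uncross_of_notMem hu',
      mem_uncross_of_mem (Set.mem_compl hv)] at he ⊢
    tauto
  have hinter : edgesIn G (uncross A X Y) ∩ edgesIn G (uncross Aᶜ X Y) =
      edgesIn G X ∩ edgesIn G Y := by
    rw [← edgesIn_inter, uncross_inter_uncross_compl, edgesIn_inter]
  rw [← Set.ncard_union_add_ncard_inter, ← Set.ncard_union_add_ncard_inter (edgesIn G X), hinter]
  gcongr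
  exact Set.toFinite _

theorem Bipartition.coverCost_uncross_add_le (hG : Bipartition G A B) (b : W → ℕ) (X Y : Set W) :
    coverCost G b (uncross A X Y) + coverCost G b (uncross Aᶜ X Y) ≤
      coverCost G b X + coverCost G b Y := by
  have hbSum := bSum_compl_uncross_add b A X Y
  have hedges := hG.ncard_edgesIn_uncross_add_le X Y
  unfold coverCost
  omega

theorem Bipartition.exists_coverCost_le_max (hG : Bipartition G A B) (he : e ∈ G.edgeSet)
    (b : W → ℕ) (Z₁ Z₂ : Set W) :
    ∃ Z, coverCost G (b + (e : Set W).indicator 1) Z ≤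
      max (coverCost (G.deleteEdges {e}) (b + (e : Set W).indicator 1) Z₁)
        (coverCost (G.deleteEdges {e}) b Z₂ + 1) := by
  by_cases hends : ∃ w ∈ e, w ∈ Z₂
  · obtain ⟨w, hwe, hwZ⟩ := hends
    exact ⟨Z₂, (coverCost_add_indicator_coe_le_deleteEdges_add_one hwe hwZ).trans
      (le_max_right _ _)⟩
  push Not at hends
  obtain ⟨u, hu, v, hv, rfl⟩ := hG.exists_eq_mk he
  have huZ₂ : u ∉ Z₂ := hends u (Sym2.mem_mk_left u v)
  have hvZ₂ : v ∉ Z₂ := hends v (Sym2.mem_mk_right u v)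
  have huA : u ∉ uncross A Z₁ Z₂ := fun h ↦ huZ₂ ((mem_uncross_of_mem hu).mp h).2
  have hvA : v ∉ uncross Aᶜ Z₁ Z₂ := fun h ↦ hvZ₂ ((mem_uncross_of_mem hv).mp h).2
  set b' := b + (s(u, v) : Set W).indicator 1
  have hsubmodular := (hG.mono (G.deleteEdges_le {s(u, v)})).coverCost_uncross_add_le b' Z₁ Z₂
  rw [coverCost_deleteEdges_singleton_of_notMem (Sym2.mem_mk_left u v) huA,
    coverCost_deleteEdges_singleton_of_notMem (Sym2.mem_mk_right u v) hvA] at hsubmodular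
  have hZ₂ : coverCost (G.deleteEdges {s(u, v)}) b' Z₂ ≤
      coverCost (G.deleteEdges {s(u, v)}) b Z₂ + 2 :=
    coverCost_add_indicator_coe_le_add_two _ b s(u, v) Z₂
  by_contra! hlarge
  have hlarge_uncross := hlarge (uncross A Z₁ Z₂)
  have hlarge_uncross_compl := hlarge (uncross Aᶜ Z₁ Z₂)
  omega

theorem Bipartition.exists_isBMatching_coverCost_le_ncard (hG : Bipartition G A B) (b : W → ℕ) :
    ∃ M, IsBMatching G b M ∧ ∃ Z, coverCost G b Z ≤ M.ncard := by
  induction G using WellFoundedLT.induction generalizing b with | _ G ih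
  obtain hE | ⟨e, he⟩ := G.edgeSet.eq_empty_or_nonempty
  · exact ⟨∅, isBMatching_empty G b, Set.univ, by simp [coverCost, bSum, edgesIn, hE]⟩
  have hle : G.deleteEdges {e} ≤ G := G.deleteEdges_le {e}
  have hlt : G.deleteEdges {e} < G := by
    rw [← SimpleGraph.edgeSet_ssubset_edgeSet, SimpleGraph.edgeSet_deleteEdges]
    exact Set.sdiff_singleton_ssubset.mpr he
  obtain ⟨M₁, hM₁, Z₁, hZ₁⟩ := ih _ hlt (hG.mono hle) b
  by_cases hb : ∃ w ∈ e, b w = 0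
  · obtain ⟨w, hwe, hbw⟩ := hb
    refine ⟨M₁, hM₁.mono hle, Z₁ \ {w}, ?_⟩
    rw [← coverCost_deleteEdges_singleton_of_notMem hwe
      (Set.notMem_sdiff_of_mem (Set.mem_singleton w))]
    exact (coverCost_sdiff_singleton_le hbw Z₁).trans hZ₁
  have hle_b : (e : Set W).indicator 1 ≤ b :=
    Set.indicator_le fun w hw ↦ Nat.one_le_iff_ne_zero.mpr fun hbw ↦ hb ⟨w, hw, hbw⟩
  obtain ⟨b', rfl⟩ := le_iff_exists_add'.mp hle_b
  obtain ⟨M₂, hM₂, Z₂, hZ₂⟩ := ih _ hlt (hG.mono hle) b'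
  obtain ⟨Z, hZ⟩ := hG.exists_coverCost_le_max he b' Z₁ Z₂
  have heM₂ : e ∉ M₂ := fun h ↦ by simpa using hM₂.1 h
  rcases le_total (M₂.ncard + 1) M₁.ncard with hM | hM
  · exact ⟨M₁, hM₁.mono hle, Z, by omega⟩
  · refine ⟨insert e M₂, (hM₂.mono hle).insert_edge he, Z, ?_⟩
    rw [Set.ncard_insert_of_notMem heM₂]
    omega

end MinMax

/-- The maximum cardinality of a `b`-matching of a finite bipartite graph `G` equals the
minimum, over all `Z ⊆ V(G)`, of `b(V(G) ∖ Z) + |E[Z]|`. -/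
theorem stmt_0 (G : SimpleGraph V) (A B : Set V) (hG : Bipartition G A B) (b : V → ℕ) :
    ∃ m : ℕ,
      IsGreatest {n : ℕ | ∃ M : Set (Sym2 V), IsBMatching G b M ∧ M.ncard = n} m ∧
      IsLeast {n : ℕ | ∃ Z : Set V, bSum b Zᶜ + (edgesIn G Z).ncard = n} m := by
  obtain ⟨M, hM, Z, hZ⟩ := hG.exists_isBMatching_coverCost_le_ncard b
  refine ⟨M.ncard, ⟨⟨M, hM, rfl⟩, ?_⟩, ⟨Z, hZ.antisymm (hM.ncard_le_coverCost Z)⟩, ?_⟩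
  · rintro _ ⟨N, hN, rfl⟩
    exact (hN.ncard_le_coverCost Z).trans hZ
  · rintro _ ⟨Y, rfl⟩
    exact hM.ncard_le_coverCost Y
end

section
/- Let G be a finite bipartite graph and b : V(G) → ℕ. If Z ⊆ V(G) is a b-verifying set, then for every maximum b-matching M of G: (i) E[Z] ⊆ M, (ii) E[V(G) ∖ Z] ∩ M = ∅, and (iii) every M-loose vertex is contained in Z. Consequently, every edge in E[Z] is b-inevitable and every edge in E[V(G) ∖ Z] is b-forbidden. -/
open scoped symmDiff

variable {V : Type} [Fintype V]

/-!
An edge has two distinct ends, so the number of its ends outside `Z` is one, increased by one if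
both ends lie in `Zᶜ` and decreased by one if both lie in `Z`. Summing over a set `M` of edges gives
`∑_{v ∉ Z} |δ(v) ∩ M| + |E[Z] ∩ M| = |M| + |E[Zᶜ] ∩ M|`. Hence the duality gap
`b(Zᶜ) + |E[Z]| - |M|` of a `b`-matching `M` is the sum of the nonnegative quantities `|E[Z] \ M|`,
`|E[Zᶜ] ∩ M|` and `∑_{v ∉ Z} (b v - |δ(v) ∩ M|)`. If `Z` is `b`-verifying, the gap of a maximum
`b`-matching is zero, so all three vanish.
-/

section Verifying

open scoped Finset

theorem card_inter_add_ite_disjoint_of_card_eq_two {α : Type*} [DecidableEq α] {s : Finset α}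
    (hs : #s = 2) (X : Finset α) :
    #(s ∩ X) + (if Disjoint s X then 1 else 0) = 1 + if s ⊆ X then 1 else 0 := by
  obtain ⟨x, y, hxy, rfl⟩ := Finset.card_eq_two.mp hs
  by_cases hx : x ∈ X <;> by_cases hy : y ∈ X <;> simp [Finset.insert_subset_iff, hx, hy, hxy]

theorem sum_card_incident_add_card_disjoint {α : Type*} [DecidableEq α] {M : Finset (Sym2 α)}
    (hM : ∀ e ∈ M, ¬e.IsDiag) (X : Finset α) :
    ∑ v ∈ X, #{e ∈ M | v ∈ e} + #{e ∈ M | Disjoint e.toFinset X} =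
      #M + #{e ∈ M | e.toFinset ⊆ X} := by
  have double_count : ∑ v ∈ X, #{e ∈ M | v ∈ e} = ∑ e ∈ M, #(e.toFinset ∩ X) := by
    refine (Finset.sum_card_bipartiteAbove_eq_sum_card_bipartiteBelow (· ∈ ·)).trans ?_
    refine Finset.sum_congr rfl fun e _ ↦ congrArg Finset.card ?_
    ext v
    simp [Finset.bipartiteBelow, and_comm]
  rw [double_count, Finset.card_filter, Finset.card_filter, Finset.card_eq_sum_ones M,
    ← Finset.sum_add_distrib, ← Finset.sum_add_distrib]
  exact Finset.sum_congr rfl fun e he ↦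
    card_inter_add_ite_disjoint_of_card_eq_two (e.card_toFinset_of_not_isDiag (hM e he)) X

variable {W : Type} {G : SimpleGraph W} {b : W → ℕ} {M : Set (Sym2 W)} {Z : Set W}

theorem bSum_eq_sum_toFinset (b : W → ℕ) (X : Set W) [Fintype X] :
    bSum b X = ∑ v ∈ X.toFinset, b v :=
  finsum_mem_eq_toFinset_sum b X

theorem bSum_add (f g : W → ℕ) {X : Set W} (hX : X.Finite) :
    bSum (fun v ↦ f v + g v) X = bSum f X + bSum g X :=
  finsum_mem_add_distrib hX

theorem bSum_eq_zero_iff {f : W → ℕ} {X : Set W} (hX : X.Finite) :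
    bSum f X = 0 ↔ ∀ v ∈ X, f v = 0 := by
  have := hX.fintype
  simp [bSum_eq_sum_toFinset]

theorem bSum_ncard_incident_add_ncard_edgesIn_compl (hM : M ⊆ G.edgeSet)
    (hM_fin : M.Finite) {X : Set W} (hX : X.Finite) :
    bSum (fun v ↦ {e ∈ M | v ∈ e}.ncard) X + (edgesIn G Xᶜ ∩ M).ncard =
      M.ncard + (edgesIn G X ∩ M).ncard := by
  classical
  have := hM_fin.fintype
  have := hX.fintype
  have incident (v : W) : {e ∈ M | v ∈ e}.ncard = #{e ∈ M.toFinset | v ∈ e} := by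
    rw [← Set.ncard_coe_finset]
    simp
  have inside (Y : Set W) :
      (edgesIn G Y ∩ M).ncard = #{e ∈ M.toFinset | ∀ v ∈ e, v ∈ Y} := by
    rw [← Set.ncard_coe_finset]
    congr 1
    ext e
    simpa [edgesIn, and_comm, and_assoc] using fun he _ ↦ hM he
  have hdiag : ∀ e ∈ M.toFinset, ¬e.IsDiag :=
    fun e he ↦ G.not_isDiag_of_mem_edgeSet (hM (Set.mem_toFinset.mp he))
  have hcount := sum_card_incident_add_card_disjoint hdiag X.toFinset
  simp only [Finset.disjoint_left, Finset.subset_iff, Sym2.mem_toFinset, Set.mem_toFinset]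
    at hcount
  simpa only [bSum_eq_sum_toFinset, incident, inside, Set.ncard_eq_toFinset_card',
    Set.mem_compl_iff] using hcount

theorem IsBMatching.ncard_add_gap_eq [Finite W] (hM : IsBMatching G b M) (Z : Set W) :
    M.ncard + ((edgesIn G Z \ M).ncard + (edgesIn G Zᶜ ∩ M).ncard +
      bSum (fun v ↦ b v - {e ∈ M | v ∈ e}.ncard) Zᶜ) = bSum b Zᶜ + (edgesIn G Z).ncard := by
  have hcount := bSum_ncard_incident_add_ncard_edgesIn_compl hM.1 M.toFinite Zᶜ.toFinite
  rw [compl_compl] at hcount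
  have hsplit : bSum b Zᶜ = bSum (fun v ↦ {e ∈ M | v ∈ e}.ncard) Zᶜ +
      bSum (fun v ↦ b v - {e ∈ M | v ∈ e}.ncard) Zᶜ := by
    rw [← bSum_add _ _ (Set.toFinite _)]
    exact congrArg (bSum · Zᶜ) (funext fun v ↦ (Nat.add_sub_of_le (hM.2 v)).symm)
  have hinside := Set.ncard_inter_add_ncard_sdiff_eq_ncard (edgesIn G Z) M (Set.toFinite _)
  lia

theorem IsBMatching.bSum_compl_add_ncard_edgesIn_eq_ncard_iff [Finite W]
    (hM : IsBMatching G b M) :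
    bSum b Zᶜ + (edgesIn G Z).ncard = M.ncard ↔
      edgesIn G Z ⊆ M ∧ edgesIn G Zᶜ ∩ M = ∅ ∧ ∀ v, IsLoose b M v → v ∈ Z := by
  have hloose : bSum (fun v ↦ b v - {e ∈ M | v ∈ e}.ncard) Zᶜ = 0 ↔
      ∀ v, IsLoose b M v → v ∈ Z := by
    simp only [bSum_eq_zero_iff (Set.toFinite _), Nat.sub_eq_zero_iff_le, ← not_lt,
      Set.mem_compl_iff]
    exact forall_congr' fun v ↦ not_imp_not
  rw [← hM.ncard_add_gap_eq Z, Nat.add_eq_left, Nat.add_eq_zero_iff, Nat.add_eq_zero_iff, hloose,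
    Set.ncard_eq_zero, Set.ncard_eq_zero, Set.sdiff_eq_empty, and_assoc]

theorem IsMaxBMatching.ncard_eq {N : Set (Sym2 W)} (hM : IsMaxBMatching G b M)
    (hN : IsMaxBMatching G b N) : M.ncard = N.ncard :=
  le_antisymm (hN.2 M hM.1) (hM.2 N hN.1)

theorem IsVerifying.complementary_slackness [Finite W] (hZ : IsVerifying G b Z)
    (hM : IsMaxBMatching G b M) :
    edgesIn G Z ⊆ M ∧ edgesIn G Zᶜ ∩ M = ∅ ∧ ∀ v, IsLoose b M v → v ∈ Z := by
  obtain ⟨N, hN, hcard⟩ := hZ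
  exact hM.1.bSum_compl_add_ncard_edgesIn_eq_ncard_iff.mp (hcard.trans (hN.ncard_eq hM))

theorem stmt_2_general [Finite W] (hZ : IsVerifying G b Z) :
    (∀ M : Set (Sym2 W), IsMaxBMatching G b M →
      edgesIn G Z ⊆ M ∧ edgesIn G Zᶜ ∩ M = ∅ ∧ ∀ v : W, IsLoose b M v → v ∈ Z) ∧
    (∀ e ∈ edgesIn G Z, IsInevitable G b e) ∧
    (∀ e ∈ edgesIn G Zᶜ, IsForbidden G b e) := by
  refine ⟨fun M hM ↦ hZ.complementary_slackness hM, fun e he ↦ ⟨he.1, fun M hM ↦ ?_⟩,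
    fun e he ↦ ⟨he.1, fun M hM heM ↦ ?_⟩⟩
  · exact (hZ.complementary_slackness hM).1 he
  · exact (hZ.complementary_slackness hM).2.1.le ⟨he, heM⟩

end Verifying

/-- If `Z` is a `b`-verifying set then for every maximum `b`-matching `M`: `E[Z] ⊆ M`,
`E[Zᶜ] ∩ M = ∅`, every `M`-loose vertex lies in `Z`; consequently every edge of `E[Z]` is
`b`-inevitable and every edge of `E[Zᶜ]` is `b`-forbidden. -/
theorem stmt_2 (G : SimpleGraph V) (A B : Set V) (hG : Bipartition G A B) (b : V → ℕ)
    (Z : Set V) (hZ : IsVerifying G b Z) :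
    (∀ M : Set (Sym2 V), IsMaxBMatching G b M →
      edgesIn G Z ⊆ M ∧ edgesIn G Zᶜ ∩ M = ∅ ∧ ∀ v : V, IsLoose b M v → v ∈ Z) ∧
    (∀ e ∈ edgesIn G Z, IsInevitable G b e) ∧
    (∀ e ∈ edgesIn G Zᶜ, IsForbidden G b e) :=
  stmt_2_general hZ
end

section
/- Let G be a finite bipartite graph with color classes A and B, b : V(G) → ℕ, let Z be a b-verifying set, and set Z₁ := (Z ∩ A) ∪ (B ∖ Z) and Z₂ := (A ∖ Z) ∪ (Z ∩ B). Then: (i) Z₁ and Z₂ are separating, i.e., each of them is empty or a union of vertex sets of b-flexible components; (ii) every b-inconsistent flexible component hooked up by A has its vertex set contained in Z₁, and every b-inconsistent flexible component hooked up by B has its vertex set contained in Z₂; and (iii) no b-inconsistent flexible component is hooked up by both A and B. -/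
open scoped symmDiff

variable {V : Type} [Fintype V]

/-!
Double counting the incidences between a `b`-matching `M` and `Zᶜ` gives the exact identity
`|M| + ∑_{v ∉ Z} (b v - |δ(v) ∩ M|) + |E[Z] \ M| + |M ∩ E[Zᶜ]| = b(Zᶜ) + |E[Z]|`.
If `Z` is verifying and `M` is maximum, the three slack terms vanish. Hence edges inside `Z` are
inevitable and edges inside `Zᶜ` are forbidden, so flexible edges cross between `Z` and `Zᶜ` just
as they cross between `A` and `B`, and the set `Z₁ = Z ⇔ A` is closed under them. Moreover, all
vertices outside `Z` are tight, so `D(G;b) ⊆ Z`; and since no inevitable edge has an end `v` with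
`b v = 0`, such a `v` lies outside `Z` as soon as it has a neighbour in `Z`.
-/

section DoubleCounting

variable {α : Type*}

open scoped Classical in
theorem card_filter_mem_of_not_isDiag (W : Finset α) {e : Sym2 α} (he : ¬e.IsDiag) :
    {v ∈ W | v ∈ e}.card =
      (if ∃ v ∈ e, v ∈ W then 1 else 0) + (if ∀ v ∈ e, v ∈ W then 1 else 0) := by
  induction e with
  | h x y =>
    have hxy : x ≠ y := he
    have hfilter : {v ∈ W | v ∈ s(x, y)} = {x, y} ∩ W := by
      ext v
      simp [and_comm]
    rw [hfilter]
    by_cases hx : x ∈ W <;> by_cases hy : y ∈ W <;> simp [hx, hy, hxy]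

theorem finsum_mem_ncard_incident {M : Set (Sym2 α)} {W : Set α} (hM : M.Finite) (hW : W.Finite)
    (hdiag : ∀ e ∈ M, ¬e.IsDiag) :
    ∑ᶠ v ∈ W, {e ∈ M | v ∈ e}.ncard =
      {e ∈ M | ∃ v ∈ e, v ∈ W}.ncard + {e ∈ M | ∀ v ∈ e, v ∈ W}.ncard := by
  classical
  lift M to Finset (Sym2 α) using hM
  lift W to Finset α using hW
  rw [finsum_mem_coe_finset]
  simp only [Finset.mem_coe, ← Finset.coe_filter, Set.ncard_coe_finset]
  calc ∑ v ∈ W, {e ∈ M | v ∈ e}.card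
      = ∑ e ∈ M, {v ∈ W | v ∈ e}.card :=
        Finset.sum_card_bipartiteAbove_eq_sum_card_bipartiteBelow (fun v e ↦ v ∈ e)
    _ = ∑ e ∈ M, ((if ∃ v ∈ e, v ∈ W then 1 else 0) + (if ∀ v ∈ e, v ∈ W then 1 else 0)) :=
        Finset.sum_congr rfl fun e he ↦ card_filter_mem_of_not_isDiag W (hdiag e he)
    _ = _ := by rw [Finset.sum_add_distrib, Finset.card_filter, Finset.card_filter]

end DoubleCounting

section ComplementarySlackness

omit [Fintype V]

variable {G : SimpleGraph V} {b : V → ℕ} {Z : Set V} {M : Set (Sym2 V)} {u v : V}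

theorem flexGraph_le : flexGraph G b ≤ G :=
  fun _ _ ⟨⟨_, hM, he⟩, _⟩ ↦ hM.1.1 he

theorem mk_mem_edgesIn_iff : s(u, v) ∈ edgesIn G Z ↔ G.Adj u v ∧ u ∈ Z ∧ v ∈ Z := by
  simp [edgesIn]

theorem finsum_mem_compl_ncard_incident [Finite V] (hM : M ⊆ G.edgeSet) (Z : Set V) :
    ∑ᶠ v ∈ Zᶜ, {e ∈ M | v ∈ e}.ncard =
      (M \ edgesIn G Z).ncard + (M ∩ edgesIn G Zᶜ).ncard := by
  have hmeet : {e ∈ M | ∃ v ∈ e, v ∈ Zᶜ} = M \ edgesIn G Z := by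
    ext e
    have := @hM e
    simp only [edgesIn, Set.mem_sdiff, Set.mem_ofPred_eq, Set.mem_compl_iff, not_and, not_forall]
    grind
  have hinside : {e ∈ M | ∀ v ∈ e, v ∈ Zᶜ} = M ∩ edgesIn G Zᶜ := by
    ext e
    have := @hM e
    simp only [edgesIn, Set.mem_inter_iff, Set.mem_ofPred_eq]
    tauto
  rw [finsum_mem_ncard_incident M.toFinite Zᶜ.toFinite
    fun e he ↦ G.not_isDiag_of_mem_edgeSet (hM he), hmeet, hinside]

theorem IsBMatching.ncard_add_slack [Finite V] (hM : IsBMatching G b M) (Z : Set V) :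
    M.ncard + ∑ᶠ v ∈ Zᶜ, (b v - {e ∈ M | v ∈ e}.ncard) + (edgesIn G Z \ M).ncard +
      (M ∩ edgesIn G Zᶜ).ncard = bSum b Zᶜ + (edgesIn G Z).ncard := by
  have hb : ∑ᶠ v ∈ Zᶜ, {e ∈ M | v ∈ e}.ncard + ∑ᶠ v ∈ Zᶜ, (b v - {e ∈ M | v ∈ e}.ncard) =
      bSum b Zᶜ := by
    rw [← finsum_mem_add_distrib Zᶜ.toFinite]
    exact finsum_mem_congr rfl fun v _ ↦ Nat.add_sub_of_le (hM.2 v)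
  have hM_split := Set.ncard_inter_add_ncard_sdiff_eq_ncard M (edgesIn G Z)
  have hE_split := Set.ncard_inter_add_ncard_sdiff_eq_ncard (edgesIn G Z) M
  rw [Set.inter_comm] at hE_split
  have hcount := finsum_mem_compl_ncard_incident hM.1 Z
  omega

theorem IsVerifying.ncard_eq (hZ : IsVerifying G b Z) (hM : IsMaxBMatching G b M) :
    M.ncard = bSum b Zᶜ + (edgesIn G Z).ncard := by
  obtain ⟨N, hN, hN_card⟩ := hZ
  exact hN_card ▸ (hN.2 M hM.1).antisymm (hM.2 N hN.1)

variable [Finite V]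

theorem IsVerifying.edgesIn_subset (hZ : IsVerifying G b Z) (hM : IsMaxBMatching G b M) :
    edgesIn G Z ⊆ M := by
  have hslack := hM.1.ncard_add_slack Z
  have hcard := hZ.ncard_eq hM
  rw [← Set.sdiff_eq_empty, ← Set.ncard_eq_zero]
  omega

theorem IsVerifying.disjoint_edgesIn_compl (hZ : IsVerifying G b Z)
    (hM : IsMaxBMatching G b M) : Disjoint M (edgesIn G Zᶜ) := by
  have hslack := hM.1.ncard_add_slack Z
  have hcard := hZ.ncard_eq hM
  rw [Set.disjoint_iff_inter_eq_empty, ← Set.ncard_eq_zero]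
  omega

theorem IsVerifying.isTight (hZ : IsVerifying G b Z) (hM : IsMaxBMatching G b M) (hv : v ∉ Z) :
    IsTight b M v := by
  have hslack := hM.1.ncard_add_slack Z
  have hcard := hZ.ncard_eq hM
  have hsum : ∑ᶠ v ∈ Zᶜ, (b v - {e ∈ M | v ∈ e}.ncard) = 0 := by omega
  rw [finsum_mem_eq_finite_toFinset_sum _ Zᶜ.toFinite, Finset.sum_eq_zero_iff] at hsum
  exact (hM.1.2 v).antisymm (Nat.sub_eq_zero_iff_le.1 (hsum v (by simpa using hv)))

theorem IsVerifying.Dset_subset (hZ : IsVerifying G b Z) : Dset G b ⊆ Z := by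
  rintro v ⟨M, hM, hloose⟩
  by_contra hv
  exact hloose.ne (hZ.isTight hM hv)

theorem IsVerifying.mem_iff_notMem_of_flexGraph_adj (hZ : IsVerifying G b Z)
    (huv : (flexGraph G b).Adj u v) : u ∈ Z ↔ v ∉ Z := by
  have hadj : G.Adj u v := flexGraph_le huv
  obtain ⟨⟨M, hM, he⟩, ⟨N, hN, he'⟩⟩ := huv
  constructor
  · intro hu hv
    exact he' (hZ.edgesIn_subset hN (mk_mem_edgesIn_iff.2 ⟨hadj, hu, hv⟩))
  · intro hv
    by_contra hu
    exact (hZ.disjoint_edgesIn_compl hM).notMem_of_mem_left he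
      (mk_mem_edgesIn_iff.2 ⟨hadj, hu, hv⟩)

theorem IsVerifying.notMem_of_adj (hZ : IsVerifying G b Z) (hv : b v = 0) (hvu : G.Adj v u)
    (hu : u ∈ Z) : v ∉ Z := by
  intro hvZ
  have ⟨M, hM, _⟩ := hZ
  have hdeg : {e ∈ M | v ∈ e} = ∅ :=
    (Set.ncard_eq_zero).1 (Nat.le_zero.1 (hv ▸ hM.1.2 v))
  have he : s(v, u) ∈ {e ∈ M | v ∈ e} :=
    ⟨hZ.edgesIn_subset hM (mk_mem_edgesIn_iff.2 ⟨hvu, hvZ, hu⟩), Sym2.mem_mk_left v u⟩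
  exact (hdeg ▸ he : s(v, u) ∈ (∅ : Set (Sym2 V)))

end ComplementarySlackness

section Separating

omit [Fintype V]

variable {G : SimpleGraph V} {b : V → ℕ} {X : Set V}

theorem isSeparating_of_forall_flexGraph_adj
    (h : ∀ ⦃u v⦄, (flexGraph G b).Adj u v → u ∈ X → v ∈ X) : IsSeparating G b X := by
  have hreach : ∀ ⦃u v⦄, (flexGraph G b).Reachable u v → u ∈ X → v ∈ X := by
    intro u v huv hu
    rw [SimpleGraph.reachable_iff_reflTransGen] at huv
    induction huv with
    | refl => exact hu
    | tail _ hadj ih => exact h hadj ih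
  refine ⟨(flexGraph G b).connectedComponentMk '' X, ?_⟩
  rw [Set.biUnion_image]
  ext v
  simp only [Set.mem_iUnion, SimpleGraph.ConnectedComponent.mem_supp_iff,
    SimpleGraph.ConnectedComponent.eq, exists_prop]
  exact ⟨fun hv ↦ ⟨v, hv, .rfl⟩, fun ⟨u, hu, hvu⟩ ↦ hreach hvu.symm hu⟩

theorem IsSeparating.supp_subset (hX : IsSeparating G b X) {c : FlexComp G b} {v : V}
    (hvc : v ∈ c.supp) (hvX : v ∈ X) : c.supp ⊆ X := by
  obtain ⟨S, rfl⟩ := hX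
  obtain ⟨d, hd, hvd⟩ := Set.mem_iUnion₂.1 hvX
  rw [SimpleGraph.ConnectedComponent.eq_of_common_vertex hvc hvd]
  exact Set.subset_biUnion_of_mem hd

end Separating

section Bipartite

omit [Fintype V]

variable {G : SimpleGraph V} {A B Z : Set V} {b : V → ℕ} {u v : V}

theorem Bipartition.symm (hG : Bipartition G A B) : Bipartition G B A :=
  ⟨hG.disjoint.symm, Set.union_comm A B ▸ hG.cover, fun _ _ huv ↦ (hG.between huv).symm⟩

theorem Bipartition.compl_eq (hG : Bipartition G A B) : Aᶜ = B :=
  IsCompl.compl_eq ⟨hG.disjoint, codisjoint_iff.2 hG.cover⟩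

theorem Bipartition.mem_iff_notMem_of_adj (hG : Bipartition G A B) (huv : G.Adj u v) :
    u ∈ A ↔ v ∉ A := by
  have hbetween := hG.between huv
  simp only [← hG.compl_eq, Set.mem_compl_iff] at hbetween
  tauto

theorem Bipartition.inter_union_sdiff_eq_bihimp (hG : Bipartition G A B) (Z : Set V) :
    (Z ∩ A) ∪ (B \ Z) = Z ⇔ A := by
  rw [← hG.compl_eq, Set.sdiff_eq, Set.inter_comm Aᶜ]
  exact (bihimp_eq' Z A).symm

theorem Bipartition.disjoint_bihimp (hG : Bipartition G A B) (Z : Set V) :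
    Disjoint (Z ⇔ A) (Z ⇔ B) := by
  rw [Set.disjoint_left]
  simp only [← hG.compl_eq, Set.mem_bihimp_iff, Set.mem_compl_iff]
  tauto

variable [Finite V]

theorem IsVerifying.isSeparating_bihimp (hZ : IsVerifying G b Z) (hG : Bipartition G A B) :
    IsSeparating G b (Z ⇔ A) := by
  refine isSeparating_of_forall_flexGraph_adj fun u v huv hu ↦ ?_
  have hZ_flip := hZ.mem_iff_notMem_of_flexGraph_adj huv
  have hA_flip := hG.mem_iff_notMem_of_adj (flexGraph_le huv)
  rw [Set.mem_bihimp_iff] at hu ⊢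
  tauto

theorem HookedUp.supp_subset_bihimp {c : FlexComp G b} (hc : HookedUp G b A c)
    (hG : Bipartition G A B) (hZ : IsVerifying G b Z) : c.supp ⊆ Z ⇔ A := by
  rcases hc with ⟨v, ⟨hvc, hvA⟩, hvD⟩ | ⟨v, hc, hbv, u, ⟨huD, huA⟩, hvu⟩
  · have hv : v ∈ Z ⇔ A := Set.mem_bihimp_iff.2 (iff_of_true (hZ.Dset_subset hvD) hvA)
    exact (hZ.isSeparating_bihimp hG).supp_subset hvc hv
  · have hvZ : v ∉ Z := hZ.notMem_of_adj hbv hvu (hZ.Dset_subset huD)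
    have hvA : v ∉ A := (hG.mem_iff_notMem_of_adj hvu.symm).1 huA
    rw [hc, Set.singleton_subset_iff]
    exact Set.mem_bihimp_iff.2 (iff_of_false hvZ hvA)

end Bipartite

/-- For a `b`-verifying set `Z`, with `Z₁ = (Z ∩ A) ∪ (B ∖ Z)` and `Z₂ = (A ∖ Z) ∪ (Z ∩ B)`:
`Z₁` and `Z₂` are separating; every inconsistent flexible component hooked up by `A`
(resp. `B`) has vertex set inside `Z₁` (resp. `Z₂`); and no inconsistent flexible
component is hooked up by both `A` and `B`. -/
theorem stmt_4 (G : SimpleGraph V) (A B : Set V) (hG : Bipartition G A B) (b : V → ℕ)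
    (Z : Set V) (hZ : IsVerifying G b Z) :
    IsSeparating G b ((Z ∩ A) ∪ (B \ Z)) ∧
    IsSeparating G b ((A \ Z) ∪ (Z ∩ B)) ∧
    (∀ c : FlexComp G b, HookedUp G b A c → c.supp ⊆ (Z ∩ A) ∪ (B \ Z)) ∧
    (∀ c : FlexComp G b, HookedUp G b B c → c.supp ⊆ (A \ Z) ∪ (Z ∩ B)) ∧
    (∀ c : FlexComp G b, ¬ (HookedUp G b A c ∧ HookedUp G b B c)) := by
  rw [hG.inter_union_sdiff_eq_bihimp Z, Set.union_comm, hG.symm.inter_union_sdiff_eq_bihimp Z]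
  refine ⟨hZ.isSeparating_bihimp hG, hZ.isSeparating_bihimp hG.symm,
    fun c hA ↦ hA.supp_subset_bihimp hG hZ, fun c hB ↦ hB.supp_subset_bihimp hG.symm hZ, ?_⟩
  rintro c ⟨hA, hB⟩
  have hdisj : Disjoint c.supp c.supp :=
    (hG.disjoint_bihimp Z).mono (hA.supp_subset_bihimp hG hZ) (hB.supp_subset_bihimp hG.symm hZ)
  exact c.nonempty_supp.ne_empty (disjoint_self.1 hdisj)
end

section
/- Let G be a finite bipartite graph, b : V(G) → ℕ, M a maximum b-matching of G, and v an M-loose vertex. If P is an M-wedge path from a vertex u to the vertex v, then the symmetric difference M △ E(P) is also a maximum b-matching of G, and all edges of P lie in the same b-flexible component. -/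
open scoped symmDiff

variable {V : Type} [Fintype V]

/-! Along an `M`-wedge path `P` ending in `y`, every vertex other than `y` meets one edge of
`E(P) ∩ M` and at most one of `E(P) \ M`, while `y` meets none of the former and at most one of
the latter. Exchanging `E(P) ∩ M` for `E(P) \ M` therefore raises the degree at most at `y`, by at
most one, and a loose `y` has room for that. The edges of `E(P) ∩ M` cover each vertex of `P`
except `y` exactly once, so `2 |E(P) ∩ M| = |V(P)| - 1 = |E(P)|` and the exchange preserves the
size. Every edge of `P` is then in exactly one of the two maximum `b`-matchings `M` and
`M ∆ E(P)`, hence flexible. -/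

section SetAndFinset

variable {α : Type*}

lemma ncard_symmDiff_add_ncard_inter {s t : Set α} (hs : s.Finite) (ht : t.Finite) :
    (s ∆ t).ncard + (t ∩ s).ncard = s.ncard + (t \ s).ncard := by
  have hsymm : (s ∆ t).ncard = (s \ t).ncard + (t \ s).ncard :=
    Set.ncard_union_eq disjoint_sdiff_sdiff hs.sdiff ht.sdiff
  have hsplit := Set.ncard_inter_add_ncard_sdiff_eq_ncard s t hs
  rw [Set.inter_comm] at hsplit
  lia

lemma sum_card_filter_mem_eq_two_mul_card [DecidableEq α] {S : Finset α} {F : Finset (Sym2 α)}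
    (hdiag : ∀ e ∈ F, ¬ e.IsDiag) (hS : ∀ e ∈ F, ∀ w ∈ e, w ∈ S) :
    ∑ w ∈ S, (F.filter (w ∈ ·)).card = 2 * F.card := by
  have hends (e) (he : e ∈ F) : (S.filter (· ∈ e)).card = 2 := by
    rw [← Sym2.card_toFinset_of_not_isDiag e (hdiag e he)]
    congr 1
    ext w
    simpa using hS e he w
  calc ∑ w ∈ S, (F.filter (w ∈ ·)).card
    _ = ∑ e ∈ F, (S.filter (· ∈ e)).card :=
      Finset.sum_card_bipartiteAbove_eq_sum_card_bipartiteBelow (fun w e => w ∈ e)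
    _ = 2 * F.card := by rw [Finset.sum_congr rfl hends, Finset.sum_const, smul_eq_mul, mul_comm]

end SetAndFinset

section Walk

variable {W : Type*} {G H : SimpleGraph W} {x y : W}

lemma ncard_incident_edges_eq_ncard_neighborSet (p : G.Walk x y) (w : W) :
    {e | e ∈ p.edges ∧ w ∈ e}.ncard = (p.toSubgraph.neighborSet w).ncard := by
  have himage : {e | e ∈ p.edges ∧ w ∈ e} = Set.image (s(w, ·)) (p.toSubgraph.neighborSet w) := by
    ext e
    simp only [Set.mem_ofPred_eq, Set.mem_image, SimpleGraph.Subgraph.mem_neighborSet,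
      SimpleGraph.Walk.adj_toSubgraph_iff_mem_edges]
    constructor
    · rintro ⟨he, z, rfl⟩
      exact ⟨z, he, rfl⟩
    · rintro ⟨z, hz, rfl⟩
      exact ⟨hz, Sym2.mem_mk_left w z⟩
  rw [himage, Set.ncard_image_of_injective _ fun _ _ => Sym2.congr_right.mp]

lemma ncard_incident_edges_of_notMem_support (p : G.Walk x y) {w : W} (hw : w ∉ p.support) :
    {e | e ∈ p.edges ∧ w ∈ e}.ncard = 0 := by
  rw [Set.ncard_eq_zero (p.edges.finite_toSet.subset fun _ he => he.1)]
  exact Set.eq_empty_of_forall_notMem fun e he =>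
    hw (SimpleGraph.Walk.mem_support_of_mem_edges he.1 he.2)

lemma ncard_incident_edges_end_le_one {p : G.Walk x y} (hp : p.IsPath) :
    {e | e ∈ p.edges ∧ y ∈ e}.ncard ≤ 1 := by
  by_cases hnil : p.Nil
  · simp [SimpleGraph.Walk.edges_eq_nil.mpr hnil]
  · rw [ncard_incident_edges_eq_ncard_neighborSet, hp.neighborSet_toSubgraph_endpoint hnil,
      Set.ncard_singleton]

lemma ncard_incident_edges_le_two {p : G.Walk x y} (hp : p.IsPath) (w : W) :
    {e | e ∈ p.edges ∧ w ∈ e}.ncard ≤ 2 := by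
  by_cases hw : w ∈ p.support
  · obtain ⟨i, rfl, hi⟩ := SimpleGraph.Walk.mem_support_iff_exists_getVert.mp hw
    rcases Nat.eq_zero_or_pos i with rfl | hpos
    · have hstart := ncard_incident_edges_end_le_one hp.reverse
      simp only [SimpleGraph.Walk.edges_reverse, List.mem_reverse] at hstart
      rw [p.getVert_zero]
      lia
    rcases hi.eq_or_lt with rfl | hlt
    · rw [p.getVert_length]
      exact (ncard_incident_edges_end_le_one hp).trans one_le_two
    · rw [ncard_incident_edges_eq_ncard_neighborSet,
        hp.ncard_neighborSet_toSubgraph_internal_eq_two hpos.ne' hlt]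
  · rw [ncard_incident_edges_of_notMem_support p hw]
    exact zero_le_two

lemma ncard_edges_of_isTrail {p : G.Walk x y} (hp : p.IsTrail) :
    {e | e ∈ p.edges}.ncard = p.length := by
  classical
  rw [← List.coe_toFinset, Set.ncard_coe_finset, List.toFinset_card_of_nodup hp.edges_nodup,
    p.length_edges]

lemma mem_supp_connectedComponentMk_of_edges_subset {p : G.Walk x y}
    (hp : ∀ e ∈ p.edges, e ∈ H.edgeSet) {w : W} (hw : w ∈ p.support) :
    w ∈ (H.connectedComponentMk x).supp := by
  classical
  have hw' : w ∈ (p.transfer H hp).support := by rwa [p.support_transfer hp]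
  exact SimpleGraph.ConnectedComponent.eq.mpr ((p.transfer H hp).takeUntil w hw').reachable.symm

end Walk

section EdgeDeg

variable {W : Type}

lemma edgeDeg_add_edgeDeg_compl (es : List (Sym2 W)) (M : Set (Sym2 W)) (w : W) :
    edgeDeg es M w + edgeDeg es Mᶜ w = {e | e ∈ es ∧ w ∈ e}.ncard := by
  rw [← Set.ncard_inter_add_ncard_sdiff_eq_ncard {e | e ∈ es ∧ w ∈ e} M
    (es.finite_toSet.subset fun _ he => he.1)]
  simp only [edgeDeg, Set.inter_def, Set.sdiff_eq, Set.mem_ofPred_eq, and_assoc]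

lemma ncard_incident_symmDiff_add_edgeDeg {M : Set (Sym2 W)} (hM : M.Finite)
    (es : List (Sym2 W)) (w : W) :
    {e ∈ M ∆ {e | e ∈ es} | w ∈ e}.ncard + edgeDeg es M w =
      {e ∈ M | w ∈ e}.ncard + edgeDeg es Mᶜ w := by
  have hsymm : {e ∈ M ∆ {e | e ∈ es} | w ∈ e} = {e ∈ M | w ∈ e} ∆ {e | e ∈ es ∧ w ∈ e} := by
    ext e
    simp only [Set.mem_symmDiff, Set.mem_ofPred_eq]
    tauto
  have hinter : edgeDeg es M w = ({e | e ∈ es ∧ w ∈ e} ∩ {e ∈ M | w ∈ e}).ncard := by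
    rw [edgeDeg]
    congr 1
    ext e
    simp only [Set.mem_inter_iff, Set.mem_ofPred_eq]
    tauto
  have hsdiff : edgeDeg es Mᶜ w = ({e | e ∈ es ∧ w ∈ e} \ {e ∈ M | w ∈ e}).ncard := by
    rw [edgeDeg]
    congr 1
    ext e
    simp only [Set.mem_sdiff, Set.mem_compl_iff, Set.mem_ofPred_eq]
    tauto
  rw [hsymm, hinter, hsdiff]
  exact ncard_symmDiff_add_ncard_inter (hM.subset fun _ he => he.1)
    (es.finite_toSet.subset fun _ he => he.1)

lemma sum_edgeDeg_support [DecidableEq W] {G : SimpleGraph W} {x y : W} (p : G.Walk x y)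
    (M : Set (Sym2 W)) :
    ∑ w ∈ p.support.toFinset, edgeDeg p.edges M w = 2 * ({e | e ∈ p.edges} ∩ M).ncard := by
  classical
  let F : Finset (Sym2 W) := p.edges.toFinset.filter (· ∈ M)
  have hF : {e | e ∈ p.edges} ∩ M = F := by ext e; simp [F]
  have hdeg (w : W) : edgeDeg p.edges M w = (F.filter (w ∈ ·)).card := by
    rw [edgeDeg, ← Set.ncard_coe_finset]
    congr 1
    ext e
    simp only [F, Finset.coe_filter, Finset.mem_filter, List.mem_toFinset, Set.mem_ofPred_eq]
    tauto
  have hmem {e : Sym2 W} (he : e ∈ F) : e ∈ p.edges :=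
    List.mem_toFinset.mp (Finset.mem_filter.mp he).1
  rw [hF, Set.ncard_coe_finset]
  simp only [hdeg]
  exact sum_card_filter_mem_eq_two_mul_card
    (fun e he => G.not_isDiag_of_mem_edgeSet (p.edges_subset_edgeSet (hmem he)))
    fun e he w hw => List.mem_toFinset.mpr
      (SimpleGraph.Walk.mem_support_of_mem_edges (hmem he) hw)

end EdgeDeg

section WedgePath

variable {W : Type} {G : SimpleGraph W} {b : W → ℕ} {M N : Set (Sym2 W)} {x y : W}
  {p : G.Walk x y}

lemma IsWedgePath.length_eq_two_mul_ncard (hp : IsWedgePath M p) :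
    p.length = 2 * ({e | e ∈ p.edges} ∩ M).ncard := by
  classical
  obtain ⟨hpath, hone, hzero⟩ := hp
  have hy : y ∈ p.support.toFinset := List.mem_toFinset.mpr p.end_mem_support
  have hdeg (w) (hw : w ∈ p.support.toFinset.erase y) : edgeDeg p.edges M w = 1 :=
    hone w (List.mem_toFinset.mp (Finset.mem_of_mem_erase hw)) (Finset.ne_of_mem_erase hw)
  rw [← sum_edgeDeg_support, ← Finset.add_sum_erase _ _ hy, hzero, Finset.sum_congr rfl hdeg,
    Finset.sum_const, Finset.card_erase_of_mem hy,
    List.toFinset_card_of_nodup hpath.support_nodup, p.length_support]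
  simp

lemma IsWedgePath.ncard_symmDiff (hp : IsWedgePath M p) (hM : M.Finite) :
    (M ∆ {e | e ∈ p.edges}).ncard = M.ncard := by
  have hexchange := ncard_symmDiff_add_ncard_inter hM p.edges.finite_toSet
  have hsplit := Set.ncard_inter_add_ncard_sdiff_eq_ncard {e | e ∈ p.edges} M p.edges.finite_toSet
  have hlength := ncard_edges_of_isTrail hp.1.isTrail
  have hhalf := hp.length_eq_two_mul_ncard
  lia

lemma IsWedgePath.edgeDeg_compl_le (hp : IsWedgePath M p) {w : W} (hw : w ≠ y) :
    edgeDeg p.edges Mᶜ w ≤ edgeDeg p.edges M w := by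
  have hsplit := edgeDeg_add_edgeDeg_compl p.edges M w
  by_cases hmem : w ∈ p.support
  · have htwo := ncard_incident_edges_le_two hp.1 w
    have hone := hp.2.1 w hmem hw
    lia
  · have hzero := ncard_incident_edges_of_notMem_support p hmem
    lia

lemma IsWedgePath.isBMatching_symmDiff (hp : IsWedgePath M p) (hMfin : M.Finite)
    (hM : IsBMatching G b M) (hy : IsLoose b M y) :
    IsBMatching G b (M ∆ {e | e ∈ p.edges}) := by
  refine ⟨fun e he => ?_, fun w => ?_⟩
  · rcases he with ⟨he, -⟩ | ⟨he, -⟩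
    exacts [hM.1 he, p.edges_subset_edgeSet he]
  have hexchange := ncard_incident_symmDiff_add_edgeDeg hMfin p.edges w
  rcases eq_or_ne w y with rfl | hw
  · have hsplit := edgeDeg_add_edgeDeg_compl p.edges M w
    have hone := ncard_incident_edges_end_le_one hp.1
    have hloose : {e ∈ M | w ∈ e}.ncard < b w := hy
    lia
  · have hle := hp.edgeDeg_compl_le hw
    have hbound := hM.2 w
    lia

lemma IsMaxBMatching.isFlexibleEdge_of_mem_symmDiff (hM : IsMaxBMatching G b M)
    (hN : IsMaxBMatching G b N) {e : Sym2 W} (he : e ∈ M ∆ N) : IsFlexibleEdge G b e := by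
  rcases he with ⟨heM, heN⟩ | ⟨heN, heM⟩
  exacts [⟨⟨M, hM, heM⟩, N, hN, heN⟩, ⟨⟨N, hN, heN⟩, M, hM, heM⟩]

lemma mem_edgeSet_flexGraph {e : Sym2 W} : e ∈ (flexGraph G b).edgeSet ↔ IsFlexibleEdge G b e :=
  e.ind fun _ _ => Iff.rfl

end WedgePath

theorem stmt_5_general {W : Type} (G : SimpleGraph W) (b : W → ℕ)
    (M : Set (Sym2 W)) (hMfin : M.Finite) (hM : IsMaxBMatching G b M)
    (u v : W) (hv : IsLoose b M v) (p : G.Walk u v) (hp : IsWedgePath M p) :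
    IsMaxBMatching G b (M ∆ {e : Sym2 W | e ∈ p.edges}) ∧
    ∃ c : FlexComp G b, ∀ e ∈ p.edges, ∀ w ∈ e, w ∈ c.supp := by
  have hN : IsMaxBMatching G b (M ∆ {e | e ∈ p.edges}) :=
    ⟨hp.isBMatching_symmDiff hMfin hM.1 hv,
      fun N hN => (hM.2 N hN).trans_eq (hp.ncard_symmDiff hMfin).symm⟩
  have hflex : ∀ e ∈ p.edges, e ∈ (flexGraph G b).edgeSet := fun e he =>
    mem_edgeSet_flexGraph.mpr <| hM.isFlexibleEdge_of_mem_symmDiff hN <| by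
      rwa [symmDiff_symmDiff_cancel_left]
  exact ⟨hN, (flexGraph G b).connectedComponentMk u, fun e he w hw =>
    mem_supp_connectedComponentMk_of_edges_subset hflex
      (SimpleGraph.Walk.mem_support_of_mem_edges he hw)⟩

/-- If `M` is a maximum `b`-matching, `v` is `M`-loose, and `p` is an `M`-wedge path from
`u` to `v`, then `M △ E(p)` is also a maximum `b`-matching, and all edges of `p` lie in
the same `b`-flexible component. -/
theorem stmt_5 (G : SimpleGraph V) (A B : Set V) (hG : Bipartition G A B) (b : V → ℕ)
    (M : Set (Sym2 V)) (hM : IsMaxBMatching G b M)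
    (u v : V) (hv : IsLoose b M v) (p : G.Walk u v) (hp : IsWedgePath M p) :
    IsMaxBMatching G b (M ∆ {e : Sym2 V | e ∈ p.edges}) ∧
    ∃ c : FlexComp G b, ∀ e ∈ p.edges, ∀ w ∈ e, w ∈ c.supp :=
  stmt_5_general G b M M.toFinite hM u v hv p hp
end
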